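/- Let α be a locally Lipschitz class K function. For every (r,t) ∈ A_α with r > 0 and t > 0, the function κ_α is differentiable in each variable at (r,t), with ∂κ_α/∂t (r,t) = α(κ_α(r,t)) and ∂κ_α/∂r (r,t) = α(κ_α(r,t)) / α(r). -/

import Mathlib

open Set Filter MeasureTheory Topology

noncomputable section

/-- `α : [0,∞) → [0,∞)` is a class `K` function: continuous, strictly increasing, `α 0 = 0`. -/
def IsClassK (α : ℝ → ℝ) : Prop :=
  ContinuousOn α (Set.Ici 0) ∧ StrictMonoOn α (Set.Ici 0) ∧ α 0 = 0

/-- `α` is a locally Lipschitz class `K` function on `[0,∞)`. -/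
def IsLocallyLipschitzClassK (α : ℝ → ℝ) : Prop :=
  IsClassK α ∧
    ∀ x ∈ Set.Ici (0 : ℝ), ∃ K : NNReal, ∃ s ∈ nhdsWithin x (Set.Ici (0 : ℝ)),
      LipschitzOnWith K α s

/-!
For an autonomous scalar equation `y' = f y` with `f` continuous and nonvanishing, separation of
variables says that a solution goes from `a` to `x` in time `∫ u in a..x, (f u)⁻¹`. Denoting this
integral by `T x`, the solution starting at `ρ` satisfies `T (κ ρ t) = T ρ + t`. Since `T` has
derivative `1 / f` and is injective, the inverse function theorem lets us solve this equation for
`κ ρ t` and differentiate it in `ρ`. For `α` positive on `(0, ∞)` this applies because a solution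
starting at `ρ > 0` never drops below `ρ`.
-/

theorem hasDerivWithinAt_of_comp_injOn {𝕜 : Type*} [NontriviallyNormedField 𝕜] [CompleteSpace 𝕜]
    {g h : 𝕜 → 𝕜} {g' c a : 𝕜} {s U : Set 𝕜} (hg : HasStrictDerivAt g g' (h a)) (hg' : g' ≠ 0)
    (hU : U ∈ 𝓝 (h a)) (hinj : InjOn g U) (hmaps : MapsTo h s U)
    (hcomp : HasDerivWithinAt (g ∘ h) c s a) : HasDerivWithinAt h (c / g') s a := by
  set φ := hg.localInverse g g' (h a) hg'
  have hφ : HasStrictDerivAt φ g'⁻¹ (g (h a)) := hg.to_localInverse hg'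
  have hφa : φ (g (h a)) = h a := (hg.eventually_left_inverse hg').self_of_nhds
  have hφU : ∀ᶠ y in 𝓝 (g (h a)), φ y ∈ U :=
    hφ.hasDerivAt.continuousAt.eventually_mem (hφa.symm ▸ hU)
  have hφh : ∀ᶠ x in 𝓝[s] a, h x = φ (g (h x)) := by
    filter_upwards [hcomp.continuousWithinAt.eventually
      (hφU.and (hg.eventually_right_inverse hg')), self_mem_nhdsWithin] with x hx hxs
    exact hinj (hmaps hxs) hx.1 hx.2.symm
  rw [div_eq_inv_mul]
  exact (hφ.hasDerivAt.comp_hasDerivWithinAt a hcomp).congr_of_eventuallyEq hφh hφa.symm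

theorem le_of_isIntegralCurveOn_of_pos {v : ℝ → ℝ → ℝ} {y : ℝ → ℝ} {a b c : ℝ}
    (hy : IsIntegralCurveOn y v (Icc a b)) (hc : c ≤ y a) (hv : ∀ s ∈ Ico a b, 0 < v s c)
    {s : ℝ} (hs : s ∈ Icc a b) : c ≤ y s :=
  image_le_of_deriv_right_lt_deriv_boundary' continuousOn_const
    (fun x _ ↦ hasDerivWithinAt_const x (Ici x) c) hc hy.continuousOn
    (fun x hx ↦ (hy x (Ico_subset_Icc_self hx)).mono_of_mem_nhdsWithin
      (Icc_mem_nhdsGE_of_mem hx))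
    (fun x hx hcx ↦ hcx ▸ hv x hx) hs

/-- The time `∫ u in a..x, du / f u` that a solution of `y' = f y` takes to move from `a` to `x`
(negative if `x` is reached before `a`). It is meaningful when `f` is continuous and nonvanishing
between `a` and `x`. -/
def travelTime (f : ℝ → ℝ) (a x : ℝ) : ℝ :=
  ∫ u in a..x, (f u)⁻¹

section TravelTime

variable {f : ℝ → ℝ} {U : Set ℝ} {a x y : ℝ}

theorem intervalIntegrable_inv_of_ordConnected (hU : U.OrdConnected) (hf : ContinuousOn f U)
    (hf₀ : ∀ u ∈ U, f u ≠ 0) (ha : a ∈ U) (hx : x ∈ U) :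
    IntervalIntegrable (fun u ↦ (f u)⁻¹) volume a x :=
  ((hf.inv₀ hf₀).mono (hU.uIcc_subset ha hx)).intervalIntegrable

theorem travelTime_add_travelTime (hU : U.OrdConnected) (hf : ContinuousOn f U)
    (hf₀ : ∀ u ∈ U, f u ≠ 0) (ha : a ∈ U) (hx : x ∈ U) (hy : y ∈ U) :
    travelTime f a x + travelTime f x y = travelTime f a y :=
  intervalIntegral.integral_add_adjacent_intervals
    (intervalIntegrable_inv_of_ordConnected hU hf hf₀ ha hx)
    (intervalIntegrable_inv_of_ordConnected hU hf hf₀ hx hy)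

theorem hasStrictDerivAt_travelTime (hUo : IsOpen U) (hU : U.OrdConnected)
    (hf : ContinuousOn f U) (hf₀ : ∀ u ∈ U, f u ≠ 0) (ha : a ∈ U) (hx : x ∈ U) :
    HasStrictDerivAt (travelTime f a) (f x)⁻¹ x :=
  intervalIntegral.integral_hasStrictDerivAt_right
    (intervalIntegrable_inv_of_ordConnected hU hf hf₀ ha hx)
    ((hf.inv₀ hf₀).stronglyMeasurableAtFilter hUo x hx)
    ((hf.inv₀ hf₀).continuousAt (hUo.mem_nhds hx))

theorem injOn_travelTime (hUo : IsOpen U) (hU : U.OrdConnected) (hf : ContinuousOn f U)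
    (hf₀ : ∀ u ∈ U, f u ≠ 0) (ha : a ∈ U) : InjOn (travelTime f a) U := by
  have hderiv : ∀ u ∈ U, HasDerivAt (travelTime f a) (f u)⁻¹ u := fun u hu ↦
    (hasStrictDerivAt_travelTime hUo hU hf hf₀ ha hu).hasDerivAt
  refine injOn_iff_injective.2 (.of_lt_imp_ne fun ⟨x, hx⟩ ⟨y, hy⟩ hxy heq ↦ ?_)
  have hsub : Icc x y ⊆ U := hU.out hx hy
  obtain ⟨c, hc, hc₀⟩ := exists_hasDerivAt_eq_zero hxy
    (fun u hu ↦ (hderiv u (hsub hu)).continuousAt.continuousWithinAt) heq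
    (fun u hu ↦ hderiv u (hsub (Ioo_subset_Icc_self hu)))
  exact inv_ne_zero (hf₀ c (hsub (Ioo_subset_Icc_self hc))) hc₀

theorem travelTime_eq_sub_of_isIntegralCurveOn {γ : ℝ → ℝ} {s t : ℝ}
    (hγ : IsIntegralCurveOn γ (fun _ ↦ f) (uIcc s t)) (hf : ContinuousOn f (γ '' uIcc s t))
    (hf₀ : ∀ u ∈ γ '' uIcc s t, f u ≠ 0) :
    travelTime f (γ s) (γ t) = t - s := by
  have hright : ∀ τ ∈ Ioo (min s t) (max s t), HasDerivWithinAt γ (f (γ τ)) (Ioi τ) τ :=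
    fun τ hτ ↦ ((hγ τ (Ioo_subset_Icc_self hτ)).hasDerivAt
      (Icc_mem_nhds hτ.1 hτ.2)).hasDerivWithinAt
  calc travelTime f (γ s) (γ t)
      = ∫ τ in s..t, ((fun u ↦ (f u)⁻¹) ∘ γ) τ * f (γ τ) :=
        (intervalIntegral.integral_comp_mul_deriv'' hγ.continuousOn hright
          (hf.comp hγ.continuousOn (mapsTo_image _ _)) (hf.inv₀ hf₀)).symm
    _ = ∫ _ in s..t, (1 : ℝ) :=
        intervalIntegral.integral_congr fun τ hτ ↦
          inv_mul_cancel₀ (hf₀ _ (mem_image_of_mem γ hτ))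
    _ = t - s := integral_one

theorem hasDerivWithinAt_flow_initial {κ : ℝ → ℝ → ℝ} {S : Set ℝ} {r t₀ t : ℝ}
    (hUo : IsOpen U) (hU : U.OrdConnected) (hf : ContinuousOn f U) (hf₀ : ∀ u ∈ U, f u ≠ 0)
    (hinit : ∀ ρ ∈ S, κ ρ t₀ = ρ)
    (hκ : ∀ ρ ∈ S, IsIntegralCurveOn (κ ρ) (fun _ ↦ f) (uIcc t₀ t))
    (hmaps : ∀ ρ ∈ S, MapsTo (κ ρ) (uIcc t₀ t) U) (hr : r ∈ S) :
    HasDerivWithinAt (fun ρ ↦ κ ρ t) (f (κ r t) / f r) S r := by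
  have hSU : S ⊆ U := fun ρ hρ ↦ hinit ρ hρ ▸ hmaps ρ hρ left_mem_uIcc
  have hmem : ∀ ρ ∈ S, κ ρ t ∈ U := fun ρ hρ ↦ hmaps ρ hρ right_mem_uIcc
  have htime : ∀ ρ ∈ S, travelTime f r (κ ρ t) = travelTime f r ρ + (t - t₀) := by
    intro ρ hρ
    have himage : κ ρ '' uIcc t₀ t ⊆ U := (hmaps ρ hρ).image_subset
    have hflow := travelTime_eq_sub_of_isIntegralCurveOn (hκ ρ hρ) (hf.mono himage)
      fun u hu ↦ hf₀ u (himage hu)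
    rw [hinit ρ hρ] at hflow
    rw [← hflow, travelTime_add_travelTime hU hf hf₀ (hSU hr) (hSU hρ) (hmem ρ hρ)]
  have hcomp : HasDerivWithinAt (travelTime f r ∘ fun ρ ↦ κ ρ t) (f r)⁻¹ S r :=
    ((hasStrictDerivAt_travelTime hUo hU hf hf₀ (hSU hr)
      (hSU hr)).hasDerivAt.add_const (t - t₀)).hasDerivWithinAt.congr htime (htime r hr)
  have hκr := hmem r hr
  rw [← inv_div_inv]
  exact hasDerivWithinAt_of_comp_injOn (hasStrictDerivAt_travelTime hUo hU hf hf₀ (hSU hr) hκr)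
    (inv_ne_zero (hf₀ _ hκr)) (hUo.mem_nhds hκr) (injOn_travelTime hUo hU hf hf₀ (hSU hr)) hmem
    hcomp

end TravelTime

theorem IsClassK.pos {α : ℝ → ℝ} (hα : IsClassK α) (x : ℝ) (hx : 0 < x) : 0 < α x :=
  hα.2.2 ▸ hα.2.1 self_mem_Ici hx.le hx

theorem kappa_partial_derivatives_general
    (α : ℝ → ℝ) (hα : ContinuousOn α (Ioi 0)) (hpos : ∀ x, 0 < x → 0 < α x)
    (b : ℝ → ENNReal) (κ : ℝ → ℝ → ℝ)
    (hκ : ∀ r, 0 < r → κ r 0 = r ∧ ∀ t, 0 ≤ t → ENNReal.ofReal t < b r →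
      HasDerivWithinAt (κ r) (α (κ r t)) (Ici 0) t)
    (r : ℝ) (hr : 0 < r) (t : ℝ) (ht : 0 ≤ t) (htb : ENNReal.ofReal t < b r) :
    HasDerivWithinAt (κ r) (α (κ r t)) (Ici 0) t ∧
      HasDerivWithinAt (fun ρ ↦ κ ρ t) (α (κ r t) / α r) {ρ | ENNReal.ofReal t < b ρ} r := by
  refine ⟨(hκ r hr).2 t ht htb, ?_⟩
  let S : Set ℝ := {ρ | ENNReal.ofReal t < b ρ} ∩ Ioi 0
  have hcurve : ∀ ρ ∈ S, IsIntegralCurveOn (κ ρ) (fun _ ↦ α) (Icc 0 t) := fun ρ hρ s hs ↦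
    ((hκ ρ hρ.2).2 s hs.1 ((ENNReal.ofReal_le_ofReal hs.2).trans_lt hρ.1)).mono
      Icc_subset_Ici_self
  have hmaps : ∀ ρ ∈ S, MapsTo (κ ρ) (Icc 0 t) (Ioi 0) := fun ρ hρ s hs ↦
    lt_of_lt_of_le hρ.2 (le_of_isIntegralCurveOn_of_pos (hcurve ρ hρ) (hκ ρ hρ.2).1.ge
      (fun _ _ ↦ hpos ρ hρ.2) hs)
  rw [← uIcc_of_le ht] at hcurve hmaps
  have hS : HasDerivWithinAt (fun ρ ↦ κ ρ t) (α (κ r t) / α r) S r :=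
    hasDerivWithinAt_flow_initial isOpen_Ioi ordConnected_Ioi hα (fun u hu ↦ (hpos u hu).ne')
      (fun ρ hρ ↦ (hκ ρ hρ.2).1) hcurve hmaps ⟨htb, hr⟩
  exact hS.mono_of_mem_nhdsWithin (inter_mem_nhdsWithin _ (Ioi_mem_nhds hr))

/-- Let `κ_α (r, ·)` be the maximal solution of `y' = α y`, `y 0 = r` on
`[0, b_α r)`. For `(r,t) ∈ A_α` with `r, t > 0`, `κ_α` is differentiable in each variable
at `(r,t)`, with `∂κ_α/∂t (r,t) = α (κ_α r t)` and `∂κ_α/∂r (r,t) = α (κ_α r t) / α r`. -/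
theorem kappa_partial_derivatives
    (α : ℝ → ℝ) (hα : IsLocallyLipschitzClassK α)
    (b : ℝ → ENNReal) (κ : ℝ → ℝ → ℝ)
    (hκ : ∀ r : ℝ, 0 ≤ r → 0 < b r ∧ κ r 0 = r ∧
      ∀ t : ℝ, 0 ≤ t → ENNReal.ofReal t < b r →
        0 ≤ κ r t ∧ HasDerivWithinAt (κ r) (α (κ r t)) (Set.Ici 0) t)
    (hmax : ∀ r : ℝ, 0 ≤ r → b r ≠ ⊤ →
      Filter.Tendsto (κ r) (nhdsWithin (b r).toReal (Set.Iio (b r).toReal)) Filter.atTop) :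
    ∀ r : ℝ, 0 < r → ∀ t : ℝ, 0 < t → ENNReal.ofReal t < b r →
      HasDerivWithinAt (κ r) (α (κ r t)) (Set.Ici 0) t ∧
      HasDerivWithinAt (fun ρ => κ ρ t) (α (κ r t) / α r)
        {ρ : ℝ | 0 ≤ ρ ∧ ENNReal.ofReal t < b ρ} r := by
  intro r hr t ht htb
  exact (kappa_partial_derivatives_general α (hα.1.1.mono Ioi_subset_Ici_self) hα.1.pos b κ
    (fun ρ hρ ↦ ⟨(hκ ρ hρ.le).2.1, fun s hs hsb ↦ ((hκ ρ hρ.le).2.2 s hs hsb).2⟩)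
    r hr t ht.le htb).imp_right fun h ↦ h.mono fun _ hρ ↦ hρ.2
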